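/- Let n ≥ 2, let h ≠ s be indices in {1,…,n}, and let 1 ≤ t ≤ p−1. Then in W(n): (ad D_{hs}(x_h^2 x_s))^t (D_h) = (Π_{u=1}^t (u−3))·D_{hs}(x_h^t x_s) and (ad D_{hs}(x_h^2 x_s))^t (D_s) = −t!·D_{hs}(x_h^{t+1}) (the scalars read in F). In particular, both expressions vanish for t = p−1. -/

import Mathlib

/-!
Write `x = x_h`, `y = x_s`. Then `D_{hs}(x^2 y) = x^2 D_h - 2xy D_s`,
`D_{hs}(x^t y) = x^t D_h - t x^{t-1} y D_s` and `D_{hs}(x^{t+1}) = -(t+1) x^t D_s`.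
A direct computation, valid for any two commuting derivations `D_h, D_s` dual to `x, y`, gives
`[D_{hs}(x^2 y), D_{hs}(x^t y)] = (t-2) D_{hs}(x^{t+1} y)` (`bracket_mixed`) and
`[D_{hs}(x^2 y), x^t D_s] = (t+2) x^{t+1} D_s` (`bracket_pure`).
Both formulas follow by induction on `t` (`iterate_mixed`, `iterate_pure`), starting from
`t = 0`, where they read
`D_h = D_{hs}(y)` and `D_s = -D_{hs}(x)`. For `t = p-1 ≥ 4` the first product contains the factor
`u = 3`, and in the second formula `D_{hs}(x^p) = 0`.
-/

set_option maxHeartbeats 1000000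
set_option synthInstance.maxHeartbeats 400000

open scoped BigOperators
noncomputable section

variable (F : Type*) [Field F] (p n : ℕ)

/-- The ideal `(X_1^p, …, X_n^p)` of the polynomial ring. -/
def truncIdeal : Ideal (MvPolynomial (Fin n) F) :=
  Ideal.span (Set.range fun i : Fin n => MvPolynomial.X i ^ p)

/-- The truncated polynomial algebra `A(n) = F[x_1,…,x_n]/(x_1^p,…,x_n^p)`. -/
abbrev TruncP := MvPolynomial (Fin n) F ⧸ truncIdeal F p n

/-- The monomial `x^a` in `A(n)`. -/
def xpow (a : Fin n → ℕ) : TruncP F p n :=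
  Ideal.Quotient.mk _ (MvPolynomial.monomial (Finsupp.equivFunOnFinite.symm a) 1)

/-- Lift an `F`-linear map killing the truncation ideal to the quotient. -/
def liftF {N : Type*} [AddCommGroup N] [Module F N]
    (f : MvPolynomial (Fin n) F →ₗ[F] N)
    (h : (truncIdeal F p n).restrictScalars F ≤ LinearMap.ker f) :
    TruncP F p n →ₗ[F] N :=
  (Submodule.liftQ ((truncIdeal F p n).restrictScalars F) f h) ∘ₗ
    (Submodule.Quotient.restrictScalarsEquiv F (truncIdeal F p n)).symm.toLinearMap

lemma liftF_mk {N : Type*} [AddCommGroup N] [Module F N]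
    (f : MvPolynomial (Fin n) F →ₗ[F] N)
    (h : (truncIdeal F p n).restrictScalars F ≤ LinearMap.ker f)
    (x : MvPolynomial (Fin n) F) :
    liftF F p n f h (Ideal.Quotient.mk _ x) = f x := by
  simp only [liftF, LinearMap.coe_comp, Function.comp_apply, LinearEquiv.coe_coe]
  have : (Ideal.Quotient.mk (truncIdeal F p n)) x = Submodule.Quotient.mk x := rfl
  rw [this, Submodule.Quotient.restrictScalarsEquiv_symm_mk, Submodule.liftQ_apply]

lemma truncIdeal_pderiv_mem [CharP F p] (j : Fin n) {f : MvPolynomial (Fin n) F}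
    (hf : f ∈ truncIdeal F p n) :
    Ideal.Quotient.mk (truncIdeal F p n) (MvPolynomial.pderiv j f) = 0 := by
  classical
  let K : Ideal (MvPolynomial (Fin n) F) :=
    { carrier := {g | Ideal.Quotient.mk (truncIdeal F p n) (MvPolynomial.pderiv j g) = 0 ∧
        Ideal.Quotient.mk (truncIdeal F p n) g = 0},
      add_mem' := by
        rintro a b ⟨ha1, ha2⟩ ⟨hb1, hb2⟩
        refine ⟨?_, ?_⟩
        · rw [map_add, map_add, ha1, hb1, add_zero]
        · rw [map_add, ha2, hb2, add_zero]
      zero_mem' := ⟨by rw [map_zero, map_zero], by rw [map_zero]⟩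
      smul_mem' := by
        rintro c x ⟨hx1, hx2⟩
        refine ⟨?_, ?_⟩
        · have hL : MvPolynomial.pderiv j (c * x)
              = c * MvPolynomial.pderiv j x + x * MvPolynomial.pderiv j c := by
            have := (MvPolynomial.pderiv j).leibniz c x
            simpa [smul_eq_mul, mul_comm] using this
          rw [smul_eq_mul, hL]
          rw [map_add, map_mul, map_mul, hx1, hx2, mul_zero, zero_mul, add_zero]
        · rw [smul_eq_mul, map_mul, hx2, mul_zero] }
  have hle : truncIdeal F p n ≤ K := by
    rw [truncIdeal, Ideal.span_le]
    rintro _ ⟨i, rfl⟩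
    refine ⟨?_, ?_⟩
    · have hgen : MvPolynomial.pderiv j (MvPolynomial.X (R := F) i ^ p) = 0 := by
        rw [MvPolynomial.X_pow_eq_monomial, MvPolynomial.pderiv_monomial]
        rcases eq_or_ne i j with h | h
        · subst h
          simp [Finsupp.single_apply, CharP.cast_eq_zero F p]
        · simp [Finsupp.single_apply, h]
      rw [hgen, map_zero]
    · exact Ideal.Quotient.eq_zero_iff_mem.mpr (Ideal.subset_span ⟨i, rfl⟩)
  exact (hle hf).1

lemma truncIdeal_support {f : MvPolynomial (Fin n) F} (hf : f ∈ truncIdeal F p n) :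
    ∀ d ∈ f.support, ∃ i, p ≤ d i := by
  classical
  let K : Ideal (MvPolynomial (Fin n) F) :=
    { carrier := {g | ∀ d ∈ g.support, ∃ i, p ≤ d i},
      add_mem' := by
        intro a b ha hb d hd
        rcases Finset.mem_union.mp (MvPolynomial.support_add hd) with h | h
        · exact ha d h
        · exact hb d h
      zero_mem' := by simp
      smul_mem' := by
        intro c x hx d hd
        rw [smul_eq_mul] at hd
        obtain ⟨d1, hd1, d2, hd2, rfl⟩ := Finset.mem_add.mp (MvPolynomial.support_mul c x hd)
        obtain ⟨i, hi⟩ := hx d2 hd2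
        exact ⟨i, le_trans hi (by simp)⟩ }
  have hle : truncIdeal F p n ≤ K := by
    rw [truncIdeal, Ideal.span_le]
    rintro _ ⟨i, rfl⟩ d hd
    simp only [MvPolynomial.X_pow_eq_monomial] at hd
    rw [MvPolynomial.support_monomial] at hd
    simp only [one_ne_zero, if_false] at hd
    rcases Finset.mem_singleton.mp hd with rfl
    exact ⟨i, by simp⟩
  exact hle hf

/-- The coefficient of `x^a` (for `a` componentwise `< p`) of an element of `A(n)`,
as a linear functional. For `a` not in the box this is defined to be `0`. -/
def coeffT (a : Fin n → ℕ) : TruncP F p n →ₗ[F] F :=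
  if h : ∀ i, a i < p then
    liftF F p n
      { toFun := fun f => f.coeff (Finsupp.equivFunOnFinite.symm a),
        map_add' := fun f g => MvPolynomial.coeff_add _ f g,
        map_smul' := fun c f => MvPolynomial.coeff_smul _ c f }
      (by
        intro f hf
        have hf' : f ∈ truncIdeal F p n := hf
        simp only [LinearMap.mem_ker, LinearMap.coe_mk, AddHom.coe_mk]
        by_contra hne
        have hmem : Finsupp.equivFunOnFinite.symm a ∈ f.support :=
          MvPolynomial.mem_support_iff.mpr hne
        obtain ⟨i, hi⟩ := truncIdeal_support F p n hf' _ hmem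
        have heq : (Finsupp.equivFunOnFinite.symm a) i = a i := rfl
        have h2 := h i
        rw [heq] at hi
        omega)
  else 0

/-- The Jacobson–Witt algebra `W(n) = Der_F A(n)`. -/
abbrev Witt := Derivation F (TruncP F p n) (TruncP F p n)

def DjL [CharP F p] (j : Fin n) : TruncP F p n →ₗ[F] TruncP F p n :=
  liftF F p n
    ((Ideal.Quotient.mkₐ F (truncIdeal F p n)).toLinearMap ∘ₗ (MvPolynomial.pderiv j).toLinearMap)
    (by
      intro f hf
      have hf' : f ∈ truncIdeal F p n := hf
      simp only [LinearMap.mem_ker, LinearMap.coe_comp, Function.comp_apply,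
        AlgHom.toLinearMap_apply, Ideal.Quotient.mkₐ_eq_mk, Derivation.coeFn_coe]
      exact truncIdeal_pderiv_mem F p n j hf')

lemma DjL_mk [CharP F p] (j : Fin n) (f : MvPolynomial (Fin n) F) :
    DjL F p n j (Ideal.Quotient.mk _ f) = Ideal.Quotient.mk _ (MvPolynomial.pderiv j f) := by
  rw [DjL, liftF_mk]
  simp

/-- The partial derivative `D_j = ∂/∂x_j`, as a derivation of `A(n)`. -/
def Dj [CharP F p] (j : Fin n) : Witt F p n where
  toLinearMap := DjL F p n j
  map_one_eq_zero' := by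
    have h1 : (1 : TruncP F p n) = Ideal.Quotient.mk _ (1 : MvPolynomial (Fin n) F) :=
      (map_one _).symm
    rw [LinearMap.coe_mk] at *
    show DjL F p n j 1 = 0
    rw [h1, DjL_mk]
    simp
  leibniz' := by
    intro a b
    obtain ⟨x, rfl⟩ := Ideal.Quotient.mk_surjective a
    obtain ⟨y, rfl⟩ := Ideal.Quotient.mk_surjective b
    show DjL F p n j _ = _ • DjL F p n j _ + _ • DjL F p n j _
    rw [← map_mul, DjL_mk, DjL_mk, DjL_mk, smul_eq_mul, smul_eq_mul, ← map_mul, ← map_mul,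
      ← map_add]
    congr 1
    have := (MvPolynomial.pderiv j).leibniz x y
    simpa [smul_eq_mul] using this
section Cochains

variable (F : Type*) [Field F] {L : Type*} [AddCommGroup L] [Module F L]

/-- A map of two arguments which is `F`-linear in each argument. -/
def IsBilinear (ψ : L → L → L) : Prop :=
  (∀ x, IsLinearMap F (ψ x)) ∧ ∀ y, IsLinearMap F fun x => ψ x y

/-- A 2-cochain with adjoint coefficients: an alternating `F`-bilinear map. -/
def IsCochain (ψ : L → L → L) : Prop :=
  IsBilinear F ψ ∧ ∀ x, ψ x x = 0

/-- A 2-cocycle with adjoint coefficients, for the bracket `B`. -/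
def IsCocycle (B : L → L → L) (ψ : L → L → L) : Prop :=
  IsCochain F ψ ∧ ∀ x y z,
    B x (ψ y z) - B y (ψ x z) + B z (ψ x y)
      - ψ (B x y) z + ψ (B x z) y - ψ (B y z) x = 0

/-- A 2-coboundary with adjoint coefficients, for the bracket `B`. -/
def IsCoboundary (B : L → L → L) (ψ : L → L → L) : Prop :=
  ∃ φ : L →ₗ[F] L, ∀ x y, ψ x y = B x (φ y) - B y (φ x) - φ (B x y)

/-- A 2-cocycle of a subspace `V` (closed under the bracket `B` of the ambient space),
with adjoint coefficients.  The cochain is recorded as an everywhere-defined bilinear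
map preserving `V`; only its restriction to `V` is relevant. -/
def IsCocycleOn (V : Submodule F L) (B : L → L → L) (ψ : L → L → L) : Prop :=
  IsBilinear F ψ ∧ (∀ x ∈ V, ∀ y ∈ V, ψ x y ∈ V) ∧ (∀ x ∈ V, ψ x x = 0) ∧
    ∀ x ∈ V, ∀ y ∈ V, ∀ z ∈ V,
      B x (ψ y z) - B y (ψ x z) + B z (ψ x y)
        - ψ (B x y) z + ψ (B x z) y - ψ (B y z) x = 0

/-- A 2-coboundary of a subspace `V`, with adjoint coefficients. -/
def IsCoboundaryOn (V : Submodule F L) (B : L → L → L) (ψ : L → L → L) : Prop :=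
  ∃ φ : L →ₗ[F] L, (∀ x ∈ V, φ x ∈ V) ∧
    ∀ x ∈ V, ∀ y ∈ V, ψ x y = B x (φ y) - B y (φ x) - φ (B x y)

/-- A derivation of a subspace `V` closed under the bracket `B`:
an `F`-linear map preserving `V` and satisfying the Leibniz rule on `V`. -/
def IsDerivationOn (V : Submodule F L) (B : L → L → L) (γ : L →ₗ[F] L) : Prop :=
  (∀ x ∈ V, γ x ∈ V) ∧ ∀ x ∈ V, ∀ y ∈ V, γ (B x y) = B (γ x) y + B x (γ y)

/-- An inner derivation of a subspace `V`: a map agreeing on `V` with `ad z = B z ·`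
for some `z ∈ V`. -/
def IsInnerOn (V : Submodule F L) (B : L → L → L) (δ : L → L) : Prop :=
  ∃ z ∈ V, ∀ y ∈ V, δ y = B z y

/-- An inner derivation: `δ = ad z = B z ·` for some `z`. -/
def IsInner (B : L → L → L) (δ : L → L) : Prop := ∃ z, ∀ y, δ y = B z y

/-- The squaring `Sq(γ)(x,y) = ∑_{i=1}^{p-1} [γ^i(x), γ^{p-i}(y)]/(i!·(p-i)!)`
of an operator `γ`, relative to the bracket `B`. -/
def Squaring (p : ℕ) (B : L → L → L) (γ : L → L) : L → L → L := fun x y =>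
  ∑ i ∈ Finset.Ioo 0 p,
    (((Nat.factorial i * Nat.factorial (p - i) : ℕ) : F))⁻¹ • B (γ^[i] x) (γ^[p - i] y)

/-- `Sq(z) := Sq(ad z)` for an element `z`. -/
def SqE (p : ℕ) (B : L → L → L) (z : L) : L → L → L :=
  Squaring F p B (fun y => B z y)

/-- The Hochschild operator
`H_ψ(x)(y) = ∑_{j=0}^{p-1} (ad x)^j (ψ(x, (ad x)^{p-1-j}(y))) − ψ(x^{[p]}, y)`,
for the bracket `B`, the 2-cochain `ψ`, and the chosen `p`-th power `xp` of `x`. -/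
def HOp (p : ℕ) (B : L → L → L) (ψ : L → L → L) (x xp : L) : L → L := fun y =>
  (∑ j ∈ Finset.range p, (fun z => B x z)^[j] (ψ x ((fun z => B x z)^[p - 1 - j] y)))
    - ψ xp y

end Cochains

section Special

variable (F : Type*) [Field F] (p n : ℕ) [CharP F p]

/-- The element `x^a D_j` of `W(n)`. -/
def xD (a : Fin n → ℕ) (j : Fin n) : Witt F p n := xpow F p n a • Dj F p n j

/-- `D_{ij}(f) = D_j(f)·D_i − D_i(f)·D_j ∈ W(n)`. -/
def Dij (i j : Fin n) (f : TruncP F p n) : Witt F p n :=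
  Dj F p n j f • Dj F p n i - Dj F p n i f • Dj F p n j

/-- The divergence `div(∑ f_i D_i) = ∑ D_i(f_i)`, i.e. `div(E) = ∑ D_i(E(x_i))`. -/
def divW (E : Witt F p n) : TruncP F p n :=
  ∑ i, Dj F p n i (E (xpow F p n (Pi.single i 1)))

/-- The special algebra `S(n) = [S'(n), S'(n)]`, the derived subalgebra of
`S'(n) = ker(div)`, as a subspace of `W(n)`. -/
def Ssub : Submodule F (Witt F p n) :=
  Submodule.span F
    {z | ∃ D E : Witt F p n, divW F p n D = 0 ∧ divW F p n E = 0 ∧ z = ⁅D, E⁆}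

/-- The multi-index `τ = (p−1, …, p−1)`. -/
def tauE : Fin n → ℕ := fun _ => p - 1

/-- The coefficient of the basis element `x^a D_i` of `W(n)` in `E ∈ W(n)`;
it equals the coefficient of `x^a` in `E(x_i)`. -/
def coeffW (a : Fin n → ℕ) (i : Fin n) (E : Witt F p n) : F :=
  coeffT F p n a (E (xpow F p n (Pi.single i 1)))

/-- The degree-`d` homogeneous component of `W(n)`, spanned by the `x^a D_j`
with `|a| − 1 = d`. -/
def Wgr (d : ℤ) : Submodule F (Witt F p n) :=
  Submodule.span F
    {E | ∃ (a : Fin n → ℕ) (j : Fin n),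
      (∀ i, a i < p) ∧ (∑ i, (a i : ℤ)) - 1 = d ∧ E = xD F p n a j}

end Special

/-! ### Two commuting derivations dual to `x, y` -/

section Abstract

variable {R A : Type*} [CommRing R] [CommRing A] [Algebra R A]

theorem bracket_smul (c : R) (D E : Derivation R A A) : ⁅D, c • E⁆ = c • ⁅D, E⁆ := by
  ext a
  simp [Derivation.commutator_apply, smul_sub]

theorem bracket_mixed (D E : Derivation R A A) (hDE : ∀ a, D (E a) = E (D a)) (x y : A)
    (hDx : D x = 1) (hDy : D y = 0) (hEx : E x = 0) (hEy : E y = 1) (t : ℕ) :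
    ⁅x ^ 2 • D - (2 * x * y) • E, x ^ t • D - ((t : A) * x ^ (t - 1) * y) • E⁆
      = ((t : A) - 2) • (x ^ (t + 1) • D - (((t + 1 : ℕ) : A) * x ^ t * y) • E) := by
  have hD2 : D (2 : A) = 0 := D.map_natCast 2
  have hE2 : E (2 : A) = 0 := E.map_natCast 2
  ext a
  -- The exponent `t - 1` truncates at `t = 0`, and the derivative of `x ^ (t - 1)`
  -- brings in `t - 1 - 1`, so the values `0` and `1` of `t` are separate cases.
  rcases t with _ | _ | t <;>
  · simp [Derivation.commutator_apply, Derivation.leibniz, Derivation.leibniz_pow, hDE, hDx, hDy,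
      hEx, hEy, hD2, hE2, smul_eq_mul, nsmul_eq_mul]
    try ring

theorem bracket_pure (D E : Derivation R A A) (hDE : ∀ a, D (E a) = E (D a)) (x y : A)
    (hDx : D x = 1) (hEx : E x = 0) (hEy : E y = 1) (t : ℕ) :
    ⁅x ^ 2 • D - (2 * x * y) • E, x ^ t • E⁆ = ((t : A) + 2) • (x ^ (t + 1) • E) := by
  have hE2 : E (2 : A) = 0 := E.map_natCast 2
  ext a
  rcases t with _ | t <;>
  · simp [Derivation.commutator_apply, Derivation.leibniz, Derivation.leibniz_pow, hDE, hDx,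
      hEx, hEy, hE2, smul_eq_mul, nsmul_eq_mul]
    try ring

/-- Coordinate form of `D_{hs}(x^t y)`. -/
theorem skew_mixed (D E : Derivation R A A) (x y : A)
    (hDx : D x = 1) (hDy : D y = 0) (hEx : E x = 0) (hEy : E y = 1) (t : ℕ) :
    E (x ^ t * y) • D - D (x ^ t * y) • E
      = x ^ t • D - ((t : A) * x ^ (t - 1) * y) • E := by
  simp only [Derivation.leibniz, Derivation.leibniz_pow, hDx, hDy, hEx, hEy, smul_eq_mul,
    nsmul_eq_mul]
  congr 2 <;> ring

/-- Coordinate form of `D_{hs}(x^{t+1})`. -/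
theorem skew_pure (D E : Derivation R A A) (x : A) (hDx : D x = 1) (hEx : E x = 0) (t : ℕ) :
    E (x ^ (t + 1)) • D - D (x ^ (t + 1)) • E = -(((t + 1 : ℕ) : R) • x ^ t • E) := by
  ext a
  simp [Derivation.leibniz_pow, hDx, hEx, Algebra.smul_def, mul_assoc]

/-- The first iterate formula holds for all `t`, without an upper bound. -/
theorem iterate_mixed (D E : Derivation R A A) (hDE : ∀ a, D (E a) = E (D a)) (x y : A)
    (hDx : D x = 1) (hDy : D y = 0) (hEx : E x = 0) (hEy : E y = 1) (t : ℕ) :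
    (fun w => ⁅E (x ^ 2 * y) • D - D (x ^ 2 * y) • E, w⁆)^[t] D
      = (∏ u ∈ Finset.Icc 1 t, ((u : R) - 3)) • (E (x ^ t * y) • D - D (x ^ t * y) • E) := by
  induction t with
  | zero => simp [hDy, hEy]
  | succ t ih =>
    have key := bracket_mixed D E hDE x y hDx hDy hEx hEy t
    rw [Function.iterate_succ_apply', ih, bracket_smul, Finset.prod_Icc_succ_top (by omega), mul_smul]
    congr 1
    simp only [skew_mixed D E x y hDx hDy hEx hEy]
    have hscal : (t : A) - 2 = algebraMap R A (((t + 1 : ℕ) : R) - 3) := by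
      rw [map_sub, map_natCast, map_ofNat]
      push_cast
      ring
    rw [hscal, algebraMap_smul] at key
    simpa using key

theorem iterate_pure (D E : Derivation R A A) (hDE : ∀ a, D (E a) = E (D a)) (x y : A)
    (hDx : D x = 1) (hDy : D y = 0) (hEx : E x = 0) (hEy : E y = 1) (t : ℕ) :
    (fun w => ⁅E (x ^ 2 * y) • D - D (x ^ 2 * y) • E, w⁆)^[t] E
      = -((t.factorial : R) • (E (x ^ (t + 1)) • D - D (x ^ (t + 1)) • E)) := by
  -- In terms of `x^t E` the coefficient is `(t + 1)!`.
  have hform : ∀ t : ℕ, -((t.factorial : R) • (E (x ^ (t + 1)) • D - D (x ^ (t + 1)) • E))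
      = ((t + 1).factorial : R) • x ^ t • E := by
    intro t
    rw [skew_pure D E x hDx hEx, smul_neg, neg_neg, smul_smul, Nat.factorial_succ,
      ← Nat.cast_mul, mul_comm (t + 1)]
  rw [hform]
  induction t with
  | zero => simp
  | succ t ih =>
    have key := bracket_pure D E hDE x y hDx hEx hEy t
    have hz : E (x ^ 2 * y) • D - D (x ^ 2 * y) • E = x ^ 2 • D - (2 * x * y) • E := by
      simpa using skew_mixed D E x y hDx hDy hEx hEy 2
    have hscal : (t : A) + 2 = algebraMap R A ((t + 1 + 1 : ℕ) : R) := by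
      rw [map_natCast]
      push_cast
      ring
    rw [hscal, algebraMap_smul] at key
    rw [Function.iterate_succ_apply', ih, bracket_smul, hz, key, smul_smul,
      Nat.factorial_succ (t + 1), Nat.cast_mul, mul_comm ((t + 1 + 1 : ℕ) : R)]

theorem iterate_mixed_eq_zero (D E : Derivation R A A) (hDE : ∀ a, D (E a) = E (D a)) (x y : A)
    (hDx : D x = 1) (hDy : D y = 0) (hEx : E x = 0) (hEy : E y = 1) (t : ℕ) (ht : 3 ≤ t) :
    (fun w => ⁅E (x ^ 2 * y) • D - D (x ^ 2 * y) • E, w⁆)^[t] D = 0 := by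
  rw [iterate_mixed D E hDE x y hDx hDy hEx hEy,
    Finset.prod_eq_zero (Finset.mem_Icc.mpr ⟨by omega, ht⟩ : 3 ∈ Finset.Icc 1 t)
      (by norm_num), zero_smul]

/-- If `t + 1 = 0` in the scalars, then already `D_{hs}(x^{t+1})` vanishes. -/
theorem iterate_pure_eq_zero (D E : Derivation R A A) (hDE : ∀ a, D (E a) = E (D a)) (x y : A)
    (hDx : D x = 1) (hDy : D y = 0) (hEx : E x = 0) (hEy : E y = 1) (t : ℕ)
    (ht : ((t + 1 : ℕ) : R) = 0) :
    (fun w => ⁅E (x ^ 2 * y) • D - D (x ^ 2 * y) • E, w⁆)^[t] E = 0 := by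
  rw [iterate_pure D E hDE x y hDx hDy hEx hEy, skew_pure D E x hDx hEx, ht, zero_smul, neg_zero,
    smul_zero, neg_zero]

end Abstract

/-! ### Monomials and partial derivatives in `A(n)` -/

section TruncatedPolynomials

variable (F : Type*) [Field F] (p n : ℕ)

theorem xpow_add (a b : Fin n → ℕ) : xpow F p n (a + b) = xpow F p n a * xpow F p n b := by
  simp only [xpow]
  rw [← map_mul, MvPolynomial.monomial_mul, one_mul]
  have hab : Finsupp.equivFunOnFinite.symm (a + b)
      = Finsupp.equivFunOnFinite.symm a + Finsupp.equivFunOnFinite.symm b := by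
    ext i
    simp
  rw [hab]

theorem xpow_single (i : Fin n) (k : ℕ) :
    xpow F p n (Pi.single i k)
      = (Ideal.Quotient.mk (truncIdeal F p n) (MvPolynomial.X i)) ^ k := by
  rw [xpow, ← map_pow, MvPolynomial.X_pow_eq_monomial]
  have hik : Finsupp.equivFunOnFinite.symm (Pi.single i k) = Finsupp.single i k := by
    ext j
    simp
  rw [hik]

variable [CharP F p]

theorem Dj_mk (j : Fin n) (f : MvPolynomial (Fin n) F) :
    Dj F p n j (Ideal.Quotient.mk _ f) = Ideal.Quotient.mk _ (MvPolynomial.pderiv j f) :=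
  DjL_mk F p n j f

theorem Dj_comm (i j : Fin n) (a : TruncP F p n) :
    Dj F p n i (Dj F p n j a) = Dj F p n j (Dj F p n i a) := by
  obtain ⟨f, rfl⟩ := Ideal.Quotient.mk_surjective a
  rw [Dj_mk, Dj_mk, Dj_mk, Dj_mk]
  congr 1
  -- The commutator of two partial derivatives is a derivation killing every variable.
  have hc : ⁅(MvPolynomial.pderiv i : Derivation F (MvPolynomial (Fin n) F) (MvPolynomial (Fin n) F)),
      (MvPolynomial.pderiv j : Derivation F (MvPolynomial (Fin n) F) (MvPolynomial (Fin n) F))⁆ = 0 := by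
    apply MvPolynomial.derivation_ext
    intro k
    rw [Derivation.commutator_apply, MvPolynomial.pderiv_X (R := F),
      MvPolynomial.pderiv_X (R := F), Pi.single_apply, Pi.single_apply]
    split_ifs <;> simp
  have := congrArg
    (fun d : Derivation F (MvPolynomial (Fin n) F) (MvPolynomial (Fin n) F) => d f) hc
  simpa [Derivation.commutator_apply, sub_eq_zero] using this

theorem Dj_X_self (i : Fin n) :
    Dj F p n i (Ideal.Quotient.mk (truncIdeal F p n) (MvPolynomial.X i)) = 1 := by
  rw [Dj_mk, MvPolynomial.pderiv_X_self, map_one]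

theorem Dj_X_of_ne {i j : Fin n} (hij : j ≠ i) :
    Dj F p n i (Ideal.Quotient.mk (truncIdeal F p n) (MvPolynomial.X j)) = 0 := by
  rw [Dj_mk, MvPolynomial.pderiv_X_of_ne hij, map_zero]

end TruncatedPolynomials

/-- For `h ≠ s` and `1 ≤ t ≤ p−1`:
`(ad D_{hs}(x_h² x_s))^t (D_h) = (∏_{u=1}^t (u−3)) · D_{hs}(x_h^t x_s)` and
`(ad D_{hs}(x_h² x_s))^t (D_s) = −t! · D_{hs}(x_h^{t+1})` in `W(n)`;
in particular both vanish for `t = p−1`. -/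
theorem special_ad_iterate_formula_two
    (p n : ℕ) (hp : p.Prime) (hp5 : 5 ≤ p) (hn : 2 ≤ n)
    (F : Type*) [Field F] [IsAlgClosed F] [CharP F p]
    (h s : Fin n) (hhs : h ≠ s) :
    (∀ t : ℕ, 1 ≤ t → t ≤ p - 1 →
      ((fun y => ⁅Dij F p n h s
          (xpow F p n (Pi.single h 2 + Pi.single s 1)), y⁆)^[t] (Dj F p n h)
        = (∏ u ∈ Finset.Icc 1 t, ((u : F) - 3)) •
            Dij F p n h s (xpow F p n (Pi.single h t + Pi.single s 1))
      ∧ (fun y => ⁅Dij F p n h s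
          (xpow F p n (Pi.single h 2 + Pi.single s 1)), y⁆)^[t] (Dj F p n s)
        = -((t.factorial : F) •
            Dij F p n h s (xpow F p n (Pi.single h (t + 1))))))
    ∧ (fun y => ⁅Dij F p n h s
        (xpow F p n (Pi.single h 2 + Pi.single s 1)), y⁆)^[p - 1] (Dj F p n h) = 0
    ∧ (fun y => ⁅Dij F p n h s
        (xpow F p n (Pi.single h 2 + Pi.single s 1)), y⁆)^[p - 1] (Dj F p n s) = 0 := by
  have c := Dj_comm F p n h s
  have hDx := Dj_X_self F p n h
  have hDy := Dj_X_of_ne F p n hhs.symm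
  have hEx := Dj_X_of_ne F p n hhs
  have hEy := Dj_X_self F p n s
  simp only [Dij, xpow_add, xpow_single, pow_one]
  have hp0 : ((p - 1 + 1 : ℕ) : F) = 0 := by
    rw [Nat.sub_add_cancel (by omega), CharP.cast_eq_zero]
  exact ⟨fun t _ _ => ⟨iterate_mixed _ _ c _ _ hDx hDy hEx hEy t,
      iterate_pure _ _ c _ _ hDx hDy hEx hEy t⟩,
    iterate_mixed_eq_zero _ _ c _ _ hDx hDy hEx hEy (p - 1) (by omega),
    iterate_pure_eq_zero _ _ c _ _ hDx hDy hEx hEy (p - 1) hp0⟩
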